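/- arXiv:1408.0110 — 4 statements merged into one kernel-verified Lean document; each statement's English description precedes it below -/
import Mathlib

section
/- Let μ be a probability measure on [0,∞) × [0,∞), let γ : ℝ → ℝ, and let EC > 0. Assume that for all ω_P, ω_R ≥ 0 with ω_P ≠ ω_R, ∫ e^{−ω_P t − ω_R u} dμ(t,u) = (γ(ω_P) − γ(ω_R)) / ((ω_R − ω_P)·EC). Let λ_H, λ_L ≥ 0, ω > 0, and b_H, b_L ∈ [0,1] with ω ≠ λ_L(1 − b_L). Then ∫ [ ∑_{m=0}^∞ ∑_{n=0}^∞ b_H^m · b_L^n · e^{−ωu} · ((λ_H(t+u))^m / m!) · e^{−λ_H(t+u)} · ((λ_L t)^n / n!) · e^{−λ_L t} ] dμ(t,u) = (γ(λ_H(1−b_H) + λ_L(1−b_L)) − γ(ω + λ_H(1−b_H))) / ((ω − λ_L(1−b_L))·EC). -/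
/-!
For fixed `(t, u)` the two Poisson sums are exponential series, `∑ (b x) ^ m / m! = exp (b x)`, so
the integrand equals `exp (-ωP t - ωR u)` with `ωP = lH (1 - bH) + lL (1 - bL)` and
`ωR = ω + lH (1 - bH)`. These parameters are nonnegative, and distinct because
`ωR - ωP = ω - lL (1 - bL)`; the joint transform identity at `(ωP, ωR)` is the claim.
-/

open MeasureTheory

/-- Unnormalised generating function of the Poisson weights. -/
lemma tsum_pow_mul_pow_div_factorial (b x : ℝ) :
    ∑' n : ℕ, b ^ n * (x ^ n / n.factorial) = Real.exp (b * x) := by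
  rw [Real.exp_eq_exp_ℝ, NormedSpace.exp_eq_tsum_div]
  exact tsum_congr fun n => by rw [mul_pow, mul_div_assoc]

/-- The double Poisson series is a product of two exponential series. -/
lemma tsum_tsum_poisson (a b c d e x y : ℝ) :
    ∑' (m : ℕ), ∑' (n : ℕ), a ^ m * b ^ n * c * (x ^ m / m.factorial) * d
        * (y ^ n / n.factorial) * e
      = Real.exp (a * x) * Real.exp (b * y) * (c * d * e) := by
  have inner (m : ℕ) : ∑' (n : ℕ), a ^ m * b ^ n * c * (x ^ m / m.factorial) * d
        * (y ^ n / n.factorial) * e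
      = a ^ m * (x ^ m / m.factorial) * (Real.exp (b * y) * (c * d * e)) := by
    rw [← tsum_pow_mul_pow_div_factorial b y, ← tsum_mul_right, ← tsum_mul_left]
    exact tsum_congr fun n => by ring
  simp_rw [inner]
  rw [tsum_mul_right, tsum_pow_mul_pow_div_factorial]
  ring

/-- The gated waiting-time LST of a low-priority customer: integrating the double
Poisson series against the joint law of past and residual cycle time. -/
theorem stmt_2 (μ : Measure (ℝ × ℝ)) [IsProbabilityMeasure μ]
    (hsupp : ∀ᵐ p ∂μ, 0 ≤ p.1 ∧ 0 ≤ p.2)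
    (γ : ℝ → ℝ) (EC : ℝ) (hEC : 0 < EC)
    (hμ : ∀ ωP ωR : ℝ, 0 ≤ ωP → 0 ≤ ωR → ωP ≠ ωR →
      ∫ p, Real.exp (-ωP * p.1 - ωR * p.2) ∂μ = (γ ωP - γ ωR) / ((ωR - ωP) * EC))
    (lH lL ω bH bL : ℝ) (hlH : 0 ≤ lH) (hlL : 0 ≤ lL) (hω : 0 < ω)
    (hbH : bH ∈ Set.Icc (0 : ℝ) 1) (hbL : bL ∈ Set.Icc (0 : ℝ) 1)
    (hne : ω ≠ lL * (1 - bL)) :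
    ∫ p, (∑' (m : ℕ), ∑' (n : ℕ),
        bH ^ m * bL ^ n * Real.exp (-ω * p.2)
          * ((lH * (p.1 + p.2)) ^ m / m.factorial) * Real.exp (-(lH * (p.1 + p.2)))
          * ((lL * p.1) ^ n / n.factorial) * Real.exp (-(lL * p.1))) ∂μ
      = (γ (lH * (1 - bH) + lL * (1 - bL)) - γ (ω + lH * (1 - bH)))
          / ((ω - lL * (1 - bL)) * EC) := by
  have hH : 0 ≤ lH * (1 - bH) := mul_nonneg hlH (sub_nonneg.2 hbH.2)
  have hL : 0 ≤ lL * (1 - bL) := mul_nonneg hlL (sub_nonneg.2 hbL.2)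
  have key := hμ (lH * (1 - bH) + lL * (1 - bL)) (ω + lH * (1 - bH))
    (by positivity) (by positivity) (fun h => hne (by linarith))
  rw [show ω + lH * (1 - bH) - (lH * (1 - bH) + lL * (1 - bL)) = ω - lL * (1 - bL) by ring] at key
  rw [← key]
  congr 1
  funext p
  rw [tsum_tsum_poisson]
  simp only [← Real.exp_add]
  congr 1
  ring
end

section
/- Let λ > 0, EB > 0, EB2 ≥ 0, EC > 0, EC2 ≥ 0, and ρ = λ·EB with ρ < 1. Let β, γ : ℝ → ℝ satisfy the second-order expansions (β(ω) − (1 − EB·ω + EB2·ω²/2))/ω² → 0 and (γ(ω) − (1 − EC·ω + EC2·ω²/2))/ω² → 0 as ω → 0⁺. Then (1/ω)·(1 − (γ(λ(1 − β(ω))) − γ(ω)) / ((ω − λ(1 − β(ω)))·EC)) → (1 + ρ)·EC2/(2·EC) as ω → 0⁺. -/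
/-!
Put `u = λ(1 - β ω)` and `r = u / ω`, and let `g x` be the remainder of the expansion of `γ` at `x`,
divided by `x²`. The expansion of `β` gives `r → λ·EB = ρ`; as `0 < ρ < 1`, eventually `u > 0` and
`u ≠ ω`, and `u → 0⁺`, so `g u → 0`. Inserting the expansion of `γ` at `u` and at `ω`, the quantity
whose limit is taken equals exactly
`EC2 (1 + r) / (2 EC) - (g u · r² - g ω) / ((1 - r) EC)`,
which tends to `(1 + ρ) EC2 / (2 EC)`.
-/

open Filter

/-- Equation (ewgated): the mean waiting time under gated service is
`(1+ρ)·E(C²)/(2E(C))`, obtained from the waiting-time LST at `ω → 0⁺`. -/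
theorem stmt_12 (lam EB EB2 EC EC2 ρ : ℝ)
    (hlam : 0 < lam) (hEB : 0 < EB) (hEB2 : 0 ≤ EB2) (hEC : 0 < EC) (hEC2 : 0 ≤ EC2)
    (hρ : ρ = lam * EB) (hρlt : ρ < 1)
    (β γ : ℝ → ℝ)
    (hβ : Tendsto (fun ω => (β ω - (1 - EB * ω + EB2 * ω ^ 2 / 2)) / ω ^ 2)
      (nhdsWithin 0 (Set.Ioi 0)) (nhds 0))
    (hγ : Tendsto (fun ω => (γ ω - (1 - EC * ω + EC2 * ω ^ 2 / 2)) / ω ^ 2)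
      (nhdsWithin 0 (Set.Ioi 0)) (nhds 0)) :
    Tendsto (fun ω => (1 / ω) * (1 - (γ (lam * (1 - β ω)) - γ ω)
        / ((ω - lam * (1 - β ω)) * EC)))
      (nhdsWithin 0 (Set.Ioi 0)) (nhds ((1 + ρ) * EC2 / (2 * EC))) := by
  have hω : Tendsto (fun ω : ℝ => ω) (nhdsWithin 0 (Set.Ioi 0)) (nhds 0) :=
    tendsto_nhdsWithin_of_tendsto_nhds tendsto_id
  have hpos : ∀ᶠ ω : ℝ in nhdsWithin 0 (Set.Ioi 0), 0 < ω := self_mem_nhdsWithin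
  have hρpos : 0 < ρ := hρ ▸ mul_pos hlam hEB
  have hr : Tendsto (fun ω => lam * (1 - β ω) / ω) (nhdsWithin 0 (Set.Ioi 0)) (nhds ρ) := by
    have h := ((tendsto_const_nhds (x := EB)).sub
      ((hω.const_mul (EB2 / 2)).add (hβ.mul hω))).const_mul lam
    have e : lam * (EB - (EB2 / 2 * 0 + 0 * 0)) = ρ := by rw [hρ]; ring
    rw [e] at h
    refine h.congr' ?_
    filter_upwards [hpos] with ω h0
    field_simp
    ring
  have hu : Tendsto (fun ω => lam * (1 - β ω)) (nhdsWithin 0 (Set.Ioi 0))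
      (nhdsWithin 0 (Set.Ioi 0)) := by
    refine tendsto_nhdsWithin_iff.2 ⟨?_, ?_⟩
    · have h := hr.mul hω
      rw [mul_zero] at h
      refine h.congr' ?_
      filter_upwards [hpos] with ω h0
      field_simp
    · filter_upwards [hpos, hr.eventually_const_lt hρpos] with ω h0 h1
      exact (div_pos_iff_of_pos_right h0).1 h1
  have hgu := hγ.comp hu
  have hden : (1 - ρ) * EC ≠ 0 := (mul_pos (by linarith) hEC).ne'
  have hlim := (((hr.const_add 1).mul_const EC2).div_const (2 * EC)).sub
    (((hgu.mul (hr.pow 2)).sub hγ).div ((hr.const_sub 1).mul_const EC) hden)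
  rw [zero_mul, sub_zero, zero_div, sub_zero] at hlim
  refine hlim.congr' ?_
  filter_upwards [hpos, hr.eventually_const_lt hρpos, hr.eventually_lt_const hρlt] with ω h0 h1 h2
  simp only [Function.comp_apply, Pi.div_apply]
  have hu0 : 0 < lam * (1 - β ω) := (div_pos_iff_of_pos_right h0).1 h1
  have hlt : lam * (1 - β ω) < ω := (div_lt_one h0).1 h2
  generalize lam * (1 - β ω) = u at *
  have hd : ω - u ≠ 0 := by linarith
  have h1r : 1 - u / ω = (ω - u) / ω := by field_simp
  rw [h1r]
  field_simp
  ring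
end

section
/- Let λ_H, λ_L > 0, EB_H, EB_L > 0, EB_H2, EB_L2 ≥ 0, EC > 0, EC2 ≥ 0, ρ_H = λ_H·EB_H, ρ_L = λ_L·EB_L with ρ_L < 1. Let β_H, β_L, γ : ℝ → ℝ satisfy the second-order expansions (β_H(ω) − (1 − EB_H·ω + EB_H2·ω²/2))/ω² → 0, (β_L(ω) − (1 − EB_L·ω + EB_L2·ω²/2))/ω² → 0, and (γ(ω) − (1 − EC·ω + EC2·ω²/2))/ω² → 0 as ω → 0⁺. Then (1/ω)·(1 − (γ(λ_H(1 − β_H(ω)) + λ_L(1 − β_L(ω))) − γ(ω + λ_H(1 − β_H(ω)))) / ((ω − λ_L(1 − β_L(ω)))·EC)) → (1 + 2ρ_H + ρ_L)·EC2/(2·EC) as ω → 0⁺. -/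
/-!
Put `x = λ_H(1 - β_H(ω)) + λ_L(1 - β_L(ω))`, `y = ω + λ_H(1 - β_H(ω))` and
`D = ω - λ_L(1 - β_L(ω)) = y - x`, and let `r(z)` be the remainder of the expansion of `γ`,
so that `γ(z) = 1 - EC z + EC2 z²/2 + r(z) z²`. Substituting gives the exact identity
`(1/ω)(1 - (γ(x) - γ(y))/(D EC))
  = EC2/(2 EC) (x + y)/ω + (r(y) (y/ω)² - r(x) (x/ω)²) / ((D/ω) EC)`.
As `(1 - β_i(ω))/ω → EB_i` (`tendsto_one_sub_div`), one has `x/ω → ρ_H + ρ_L`,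
`y/ω → 1 + ρ_H` and `D/ω → 1 - ρ_L > 0`. In particular `x` and `y` tend to `0` from the right
(`tendsto_zero_right_of_div`), so `r(x), r(y) → 0` and only the first term survives in the limit.
-/

open Filter

/-- A second-order expansion of `β` at `0⁺` determines the first-order rate of `1 - β`. -/
lemma tendsto_one_sub_div {β : ℝ → ℝ} {b b2 : ℝ}
    (h : Tendsto (fun ω => (β ω - (1 - b * ω + b2 * ω ^ 2 / 2)) / ω ^ 2)
      (nhdsWithin 0 (Set.Ioi 0)) (nhds 0)) :
    Tendsto (fun ω => (1 - β ω) / ω) (nhdsWithin 0 (Set.Ioi 0)) (nhds b) := by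
  have hid : Tendsto (fun ω : ℝ => ω) (nhdsWithin 0 (Set.Ioi 0)) (nhds 0) :=
    tendsto_id.mono_left nhdsWithin_le_nhds
  have key := (tendsto_const_nhds (x := b)).sub
    (hid.mul (h.add (tendsto_const_nhds (x := b2 / 2))))
  rw [zero_mul, sub_zero] at key
  refine key.congr' ?_
  filter_upwards [self_mem_nhdsWithin] with ω hω
  have hω0 : ω ≠ 0 := ne_of_gt hω
  field_simp
  ring

lemma tendsto_zero_right_of_div {f : ℝ → ℝ} {c : ℝ} (hc : 0 < c)
    (h : Tendsto (fun ω => f ω / ω) (nhdsWithin 0 (Set.Ioi 0)) (nhds c)) :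
    Tendsto f (nhdsWithin 0 (Set.Ioi 0)) (nhdsWithin 0 (Set.Ioi 0)) := by
  have hid : Tendsto (fun ω : ℝ => ω) (nhdsWithin 0 (Set.Ioi 0)) (nhds 0) :=
    tendsto_id.mono_left nhdsWithin_le_nhds
  refine tendsto_nhdsWithin_iff.2 ⟨?_, ?_⟩
  · have key := h.mul hid
    rw [mul_zero] at key
    refine key.congr' ?_
    filter_upwards [self_mem_nhdsWithin] with ω hω
    exact div_mul_cancel₀ _ (ne_of_gt hω)
  · filter_upwards [self_mem_nhdsWithin, h.eventually (lt_mem_nhds hc)] with ω hω hpos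
    exact (div_pos_iff_of_pos_right hω).1 hpos

/-- Mean waiting time of a low-priority customer under gated service:
`E(W_L) = (1 + 2ρ_H + ρ_L)·E(C²)/(2E(C))`. -/
theorem stmt_13 (lH lL EBH EBL EBH2 EBL2 EC EC2 ρH ρL : ℝ)
    (hlH : 0 < lH) (hlL : 0 < lL) (hEBH : 0 < EBH) (hEBL : 0 < EBL)
    (hEBH2 : 0 ≤ EBH2) (hEBL2 : 0 ≤ EBL2) (hEC : 0 < EC) (hEC2 : 0 ≤ EC2)
    (hρH : ρH = lH * EBH) (hρL : ρL = lL * EBL) (hρLlt : ρL < 1)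
    (βH βL γ : ℝ → ℝ)
    (hβH : Tendsto (fun ω => (βH ω - (1 - EBH * ω + EBH2 * ω ^ 2 / 2)) / ω ^ 2)
      (nhdsWithin 0 (Set.Ioi 0)) (nhds 0))
    (hβL : Tendsto (fun ω => (βL ω - (1 - EBL * ω + EBL2 * ω ^ 2 / 2)) / ω ^ 2)
      (nhdsWithin 0 (Set.Ioi 0)) (nhds 0))
    (hγ : Tendsto (fun ω => (γ ω - (1 - EC * ω + EC2 * ω ^ 2 / 2)) / ω ^ 2)
      (nhdsWithin 0 (Set.Ioi 0)) (nhds 0)) :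
    Tendsto (fun ω => (1 / ω) * (1 -
        (γ (lH * (1 - βH ω) + lL * (1 - βL ω)) - γ (ω + lH * (1 - βH ω)))
          / ((ω - lL * (1 - βL ω)) * EC)))
      (nhdsWithin 0 (Set.Ioi 0)) (nhds ((1 + 2 * ρH + ρL) * EC2 / (2 * EC))) := by
  have hH := (tendsto_one_sub_div hβH).const_mul lH
  have hL := (tendsto_one_sub_div hβL).const_mul lL
  rw [← hρH] at hH
  rw [← hρL] at hL
  have hρH0 : 0 < ρH := hρH ▸ mul_pos hlH hEBH
  have hρL0 : 0 < ρL := hρL ▸ mul_pos hlL hEBL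
  set x : ℝ → ℝ := fun ω => lH * (1 - βH ω) + lL * (1 - βL ω) with hx
  set y : ℝ → ℝ := fun ω => ω + lH * (1 - βH ω) with hy
  have hxlim : Tendsto (fun ω => x ω / ω) (nhdsWithin 0 (Set.Ioi 0)) (nhds (ρH + ρL)) := by
    refine (hH.add hL).congr fun ω => ?_
    simp only [hx]
    ring
  have hylim : Tendsto (fun ω => y ω / ω) (nhdsWithin 0 (Set.Ioi 0)) (nhds (1 + ρH)) := by
    refine (hH.const_add 1).congr' ?_
    filter_upwards [self_mem_nhdsWithin] with ω hω
    have hω0 : ω ≠ 0 := ne_of_gt hω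
    simp only [hy]
    field_simp
  have hx0 := tendsto_zero_right_of_div (by positivity) hxlim
  have hy0 := tendsto_zero_right_of_div (by positivity) hylim
  have hDlim := hylim.sub hxlim
  have hDpos : 0 < 1 + ρH - (ρH + ρL) := by linarith
  have hrx := hγ.comp hx0
  have hry := hγ.comp hy0
  have key := ((hxlim.add hylim).const_mul (EC2 / (2 * EC))).add
    (((hry.mul (hylim.pow 2)).sub (hrx.mul (hxlim.pow 2))).div (hDlim.mul_const EC)
      (mul_pos hDpos hEC).ne')
  have hval : EC2 / (2 * EC) * (ρH + ρL + (1 + ρH)) +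
      (0 * (1 + ρH) ^ 2 - 0 * (ρH + ρL) ^ 2) / ((1 + ρH - (ρH + ρL)) * EC)
      = (1 + 2 * ρH + ρL) * EC2 / (2 * EC) := by
    ring
  rw [hval] at key
  refine key.congr' ?_
  filter_upwards [self_mem_nhdsWithin, hx0.eventually self_mem_nhdsWithin,
    hy0.eventually self_mem_nhdsWithin, hDlim.eventually (lt_mem_nhds hDpos)] with ω hω hxω hyω hDω
  have hω0 : ω ≠ 0 := ne_of_gt hω
  have hxne : x ω ≠ 0 := ne_of_gt hxω
  have hyne : y ω ≠ 0 := ne_of_gt hyω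
  have hDne : y ω - x ω ≠ 0 := by
    intro h0
    rw [← sub_div, h0, zero_div] at hDω
    exact lt_irrefl _ hDω
  have hD : ω - lL * (1 - βL ω) = y ω - x ω := by
    simp only [hx, hy]
    ring
  change _ = 1 / ω * (1 - (γ (x ω) - γ (y ω)) / ((ω - lL * (1 - βL ω)) * EC))
  rw [hD]
  simp only [Function.comp_apply, Pi.div_apply]
  -- From here on `x ω`, `y ω` and the values of `γ` there are independent quantities.
  generalize γ (x ω) = gx
  generalize γ (y ω) = gy
  generalize x ω = X at *
  generalize y ω = Y at *
  rw [← sub_div]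
  field_simp
  ring
end

section
/- Let λ_H, λ_L > 0, EB_H, EB_L > 0, EB_H2, EB_L2 ≥ 0, EI > 0, EI2 ≥ 0, ρ_H = λ_H·EB_H, ρ_L = λ_L·EB_L, ρ_1 = ρ_H + ρ_L with ρ_H < 1. Let β_H, β_L, Ĩ : ℝ → ℝ satisfy the second-order expansions (β_H(ω) − (1 − EB_H·ω + EB_H2·ω²/2))/ω² → 0, (β_L(ω) − (1 − EB_L·ω + EB_L2·ω²/2))/ω² → 0, and (Ĩ(ω) − (1 − EI·ω + EI2·ω²/2))/ω² → 0 as ω → 0⁺. Define F(ω) = ((1 − ρ_H)·ω/(ω − λ_H(1 − β_H(ω)))) · [ ((1 − ρ_1)/(1 − ρ_H))·(1 − Ĩ(ω))/(ω·EI) + (ρ_L/(1 − ρ_H))·(1 − β_L(ω))/(ω·EB_L) ]. Then (1 − F(ω))/ω → (ρ_H·EB_H2/(2·EB_H) + ρ_L·EB_L2/(2·EB_L))/(1 − ρ_H) + ((1 − ρ_1)/(1 − ρ_H))·EI2/(2·EI) as ω → 0⁺. -/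
/-!
Write each transform as `1 - m ω + (m₂/2 + r(ω)) ω²` with `r → 0`. Then the denominator
`ω - lH (1 - βH ω)` equals `ω D(ω)` with `D(ω) = (1 - ρH) + lH ω (EBH2/2 + rH(ω))`, and since
`(1 - ρ1) + ρL = 1 - ρH` the zeroth-order terms of `1 - F` cancel. This gives the exact identity
`(1 - F(ω))/ω = (lH (EBH2/2 + rH) + (1 - ρ1)(EI2/2 + rI)/EI + ρL (EBL2/2 + rL)/EBL) / D(ω)`
wherever `ω ≠ 0` and `D(ω) ≠ 0`, and the limit follows because `D(ω) → 1 - ρH > 0`.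
-/

open Filter


/-- Mean waiting time of a high-priority customer under exhaustive service in
intervisit form: `E(W_H) = (ρ_H E(B_H²)/(2E(B_H)) + ρ_L E(B_L²)/(2E(B_L)))/(1−ρ_H)
+ ((1−ρ_1)/(1−ρ_H))·E(I²)/(2E(I))`. -/
theorem stmt_17 (lH lL EBH EBL EBH2 EBL2 EI EI2 ρH ρL ρ1 : ℝ)
    (hlH : 0 < lH) (hlL : 0 < lL) (hEBH : 0 < EBH) (hEBL : 0 < EBL)
    (hEBH2 : 0 ≤ EBH2) (hEBL2 : 0 ≤ EBL2) (hEI : 0 < EI) (hEI2 : 0 ≤ EI2)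
    (hρH : ρH = lH * EBH) (hρL : ρL = lL * EBL) (hρ1 : ρ1 = ρH + ρL)
    (hρHlt : ρH < 1)
    (βH βL Itilde : ℝ → ℝ)
    (hβH : Tendsto (fun ω => (βH ω - (1 - EBH * ω + EBH2 * ω ^ 2 / 2)) / ω ^ 2)
      (nhdsWithin 0 (Set.Ioi 0)) (nhds 0))
    (hβL : Tendsto (fun ω => (βL ω - (1 - EBL * ω + EBL2 * ω ^ 2 / 2)) / ω ^ 2)
      (nhdsWithin 0 (Set.Ioi 0)) (nhds 0))
    (hItilde : Tendsto (fun ω => (Itilde ω - (1 - EI * ω + EI2 * ω ^ 2 / 2)) / ω ^ 2)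
      (nhdsWithin 0 (Set.Ioi 0)) (nhds 0)) :
    Tendsto (fun ω => (1 -
        ((1 - ρH) * ω / (ω - lH * (1 - βH ω)))
          * ((1 - ρ1) / (1 - ρH) * ((1 - Itilde ω) / (ω * EI))
            + ρL / (1 - ρH) * ((1 - βL ω) / (ω * EBL)))) / ω)
      (nhdsWithin 0 (Set.Ioi 0))
      (nhds ((ρH * EBH2 / (2 * EBH) + ρL * EBL2 / (2 * EBL)) / (1 - ρH)
        + (1 - ρ1) / (1 - ρH) * (EI2 / (2 * EI)))) := by
  have hne : 1 - ρH ≠ 0 := by linarith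
  have hω : Tendsto (fun ω : ℝ => ω) (nhdsWithin 0 (Set.Ioi 0)) (nhds 0) :=
    tendsto_id.mono_left nhdsWithin_le_nhds
  -- `eH`, `eL`, `eI` are the remainders `r` of the three transforms.
  set eH := fun ω => (βH ω - (1 - EBH * ω + EBH2 * ω ^ 2 / 2)) / ω ^ 2 with heH
  set eL := fun ω => (βL ω - (1 - EBL * ω + EBL2 * ω ^ 2 / 2)) / ω ^ 2 with heL
  set eI := fun ω => (Itilde ω - (1 - EI * ω + EI2 * ω ^ 2 / 2)) / ω ^ 2 with heI
  have hD : Tendsto (fun ω => (1 - ρH) + lH * ω * (EBH2 / 2 + eH ω))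
      (nhdsWithin 0 (Set.Ioi 0)) (nhds (1 - ρH)) := by
    have := ((hω.const_mul lH).mul (hβH.const_add (EBH2 / 2))).const_add (1 - ρH)
    simpa using this
  have hN : Tendsto (fun ω => lH * (EBH2 / 2 + eH ω) + (1 - ρ1) * ((EI2 / 2 + eI ω) / EI)
        + ρL * ((EBL2 / 2 + eL ω) / EBL))
      (nhdsWithin 0 (Set.Ioi 0))
      (nhds (lH * (EBH2 / 2 + 0) + (1 - ρ1) * ((EI2 / 2 + 0) / EI)
        + ρL * ((EBL2 / 2 + 0) / EBL))) :=
    (((hβH.const_add _).const_mul _).add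
      (((hItilde.const_add _).div_const _).const_mul _)).add
      (((hβL.const_add _).div_const _).const_mul _)
  have hlim : (ρH * EBH2 / (2 * EBH) + ρL * EBL2 / (2 * EBL)) / (1 - ρH)
        + (1 - ρ1) / (1 - ρH) * (EI2 / (2 * EI))
      = (lH * (EBH2 / 2 + 0) + (1 - ρ1) * ((EI2 / 2 + 0) / EI)
        + ρL * ((EBL2 / 2 + 0) / EBL)) / (1 - ρH) := by
    have h1 : ρH * EBH2 / (2 * EBH) = lH * (EBH2 / 2) := by
      rw [hρH]; field_simp
    rw [h1]
    field_simp
    ring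
  rw [hlim]
  refine (hN.div hD hne).congr' ?_
  filter_upwards [self_mem_nhdsWithin, hD.eventually_ne hne] with ω hpos hDne
  have hω0 : ω ≠ 0 := ne_of_gt hpos
  have h1 : βH ω = 1 - EBH * ω + (EBH2 / 2 + eH ω) * ω ^ 2 := by
    simp only [heH]; field_simp; ring
  have h2 : βL ω = 1 - EBL * ω + (EBL2 / 2 + eL ω) * ω ^ 2 := by
    simp only [heL]; field_simp; ring
  have h3 : Itilde ω = 1 - EI * ω + (EI2 / 2 + eI ω) * ω ^ 2 := by
    simp only [heI]; field_simp; ring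
  have hden : ω - lH * (1 - βH ω) = ω * ((1 - ρH) + lH * ω * (EBH2 / 2 + eH ω)) := by
    rw [h1, hρH]; ring
  have hL : (1 - βL ω) / (ω * EBL) = 1 - ω * ((EBL2 / 2 + eL ω) / EBL) := by
    rw [h2]; generalize EBL2 / 2 + eL ω = c; field_simp; ring
  have hI : (1 - Itilde ω) / (ω * EI) = 1 - ω * ((EI2 / 2 + eI ω) / EI) := by
    rw [h3]; generalize EI2 / 2 + eI ω = c; field_simp; ring
  rw [hden, hL, hI]
  simp only [Pi.div_apply]
  generalize (EBL2 / 2 + eL ω) / EBL = b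
  generalize (EI2 / 2 + eI ω) / EI = c
  generalize EBH2 / 2 + eH ω = a at hDne ⊢
  rw [hρ1]
  generalize hd : 1 - ρH + lH * ω * a = d at hDne ⊢
  field_simp
  linear_combination hd
end
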